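/- Airy asymptotics on the left: there is an absolute constant C such that for every t > 0 and every real-valued tempered distribution u whose profile ũ(p) = e^{−itp³} û(p) satisfies ũ ∈ L^∞(ℝ) and ∂_p ũ ∈ L²((0, ∞)), for all x < −t^{1/3}: |u(x) − t^{−1/3} Re[Ai(x/t^{1/3}) ũ(√(|x|/3t))]| ≤ C t^{−1/3} ⟨|x|/t^{1/3}⟩^{−3/10} ‖u‖_{E(t)}. -/

import Mathlib

open MeasureTheory Set Filter Topology

noncomputable section

namespace MKdVPaper

/-- The Japanese bracket `⟨y⟩ = √(1+y²)`. -/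
def jap (y : ℝ) : ℝ := Real.sqrt (1 + y ^ 2)

/-- Truncated Fourier-type integral recovering the physical function from a profile `w`:
`(1/π) Re ∫_0^R e^{i(px + p³ t)} w(p) dp`. -/
def physPartial (w : ℝ → ℂ) (t x R : ℝ) : ℝ :=
  (1 / Real.pi) *
    (∫ p in Ioc (0 : ℝ) R, Complex.exp (Complex.I * ((p * x + p ^ 3 * t : ℝ) : ℂ)) * w p).re

/-- `u` is the physical-space function associated with the profile `w` at time `t`, i.e.
`u(x) = (1/π) Re ∫_0^∞ e^{i(px + p³t)} w(p) dp` as an improper integral. -/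
def IsPhys (w : ℝ → ℂ) (t : ℝ) (u : ℝ → ℝ) : Prop :=
  ∀ x : ℝ, Tendsto (fun R => physPartial w t x R) atTop (𝓝 (u x))

/-- Sup norm of a profile. -/
def supN (w : ℝ → ℂ) : ℝ := ⨆ p : ℝ, ‖w p‖

/-- `L²((0,∞))` norm of the derivative of the profile. -/
def dL2 (w : ℝ → ℂ) : ℝ := (eLpNorm (deriv w) 2 (volume.restrict (Ioi 0))).toReal

/-- The `E(t)` norm: `‖ũ‖_{L^∞} + t^{-1/6} ‖∂_p ũ‖_{L²((0,∞))}`. -/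
def EnormP (t : ℝ) (w : ℝ → ℂ) : ℝ := supN w + t ^ (-(1 / 6 : ℝ)) * dL2 w

/-- Membership conditions for `E(t)` on the profile side: profile of a real-valued
distribution, bounded and continuous on `(0,∞)`, with derivative in `L²((0,∞))`. -/
structure MemE (w : ℝ → ℂ) : Prop where
  symm : ∀ p : ℝ, w (-p) = starRingEnd ℂ (w p)
  cont : ContinuousOn w (Ioi 0)
  bdd : BddAbove (range fun p : ℝ => ‖w p‖)
  diff : ∀ p ∈ Ioi (0 : ℝ), DifferentiableAt ℝ w p
  derivL2 : MemLp (deriv w) 2 (volume.restrict (Ioi 0))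

/-- A space-time function of class `E(I)`: a physical function `u` together with its
profile `w(t,p) = e^{-itp³} û(t,p)`. -/
structure ESol (I : Set ℝ) where
  u : ℝ → ℝ → ℝ
  w : ℝ → ℝ → ℂ
  memE : ∀ t ∈ I, MemE (w t)
  isPhys : ∀ t ∈ I, IsPhys (w t) t (u t)
  contt : ContinuousOn (fun q : ℝ × ℝ => w q.1 q.2) (I ×ˢ Ioi 0)

/-- Finiteness of the `E(I)` norm: `sup_{t ∈ I} ‖u(t)‖_{E(t)} < ∞`. -/
def FiniteEnorm (I : Set ℝ) (sol : ESol I) : Prop :=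
  BddAbove ((fun t => EnormP t (sol.w t)) '' I)

/-- Time derivative of a test function. -/
def dt1 (φ : ℝ → ℝ → ℝ) : ℝ → ℝ → ℝ := fun t x => deriv (fun s => φ s x) t

/-- Space derivative of a test function. -/
def dx1 (φ : ℝ → ℝ → ℝ) : ℝ → ℝ → ℝ := fun t x => deriv (fun y => φ t y) x

/-- `u` is a distributional solution of `∂ₜ u + ∂ₓ³ u + ε ∂ₓ(u³) = 0` on `I × ℝ`. -/
def IsSolOn (ε : ℝ) (u : ℝ → ℝ → ℝ) (I : Set ℝ) : Prop :=
  ∀ φ : ℝ → ℝ → ℝ,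
    ContDiff ℝ (⊤ : ℕ∞) (fun q : ℝ × ℝ => φ q.1 q.2) →
    HasCompactSupport (fun q : ℝ × ℝ => φ q.1 q.2) →
    tsupport (fun q : ℝ × ℝ => φ q.1 q.2) ⊆ interior I ×ˢ univ →
    (∫ q : ℝ × ℝ,
      (u q.1 q.2 * (dt1 φ q.1 q.2 + dx1 (dx1 (dx1 φ)) q.1 q.2)
        + ε * u q.1 q.2 ^ 3 * dx1 φ q.1 q.2)) = 0

/-- Self-similar solution: `S(t,x) = t^{-1/3} V(t^{-1/3} x)`. -/
def SelfSimilar {I : Set ℝ} (S : ESol I) : Prop :=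
  ∃ V : ℝ → ℝ, ∀ t ∈ I, ∀ x : ℝ,
    S.u t x = t ^ (-(1 / 3 : ℝ)) * V (t ^ (-(1 / 3 : ℝ)) * x)

/-- The Fourier transform at time 1 recovered from the profile: `û(1,p) = e^{ip³} ũ(1,p)`. -/
def hatAtOne (w : ℝ → ℂ) : ℝ → ℂ := fun p => Complex.exp (Complex.I * ((p ^ 3 : ℝ) : ℂ)) * w p

/-- The Fourier transforms at time 1 have the same limit at frequency `0⁺`. -/
def SameZeroLimit (w₁ w₂ : ℝ → ℂ) : Prop :=
  ∃ c : ℂ, Tendsto (hatAtOne w₁) (𝓝[>] (0 : ℝ)) (𝓝 c) ∧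
    Tendsto (hatAtOne w₂) (𝓝[>] (0 : ℝ)) (𝓝 c)

/-- Truncated Airy–Fock integral. -/
def AiP (z R : ℝ) : ℂ :=
  ((1 / Real.pi : ℝ) : ℂ) *
    ∫ p in Ioc (0 : ℝ) R, Complex.exp (Complex.I * ((p * z + p ^ 3 : ℝ) : ℂ))

/-- The Airy–Fock function `Ai(z) = (1/π)∫_0^∞ e^{i(pz+p³)} dp` (improper integral). -/
def AiFock (z : ℝ) : ℂ := limUnder atTop fun R => AiP z R

end MKdVPaper
namespace MKdVPaper

/-!
Write `x = -3ta²`, so that the phase `φ(p) = px + tp³` is stationary exactly at `a > 0` on the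
positive half-line. With `θ(p) = (p - a) φ'(p) = 3t (p - a)² (p + a)` the identity
`((p - a) e^{iφ})' = (1 + iθ) e^{iφ}` shows that `P = (p - a) e^{iφ} / (1 + iθ)` satisfies
`P' = e^{iφ} (1 + O(θ / (1 + θ²)))`. This single approximate primitive is bounded near `a` and
decays like `1 / φ'` away from it, so no cut-off around the stationary point is needed.

The Airy–Fock term is the improper integral of `e^{iφ} w(a)`, hence the difference to estimate is
the integral of `e^{iφ} (w - w(a))`. Integrating it by parts against `P` costs boundary terms of
size `‖w‖_∞ / |x|`, the pairing `∫ P w'`, bounded by Cauchy–Schwarz, and the error term, in which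
the `1/2`-Hölder bound `‖w(p) - w(a)‖ ≤ |p - a|^{1/2} ‖w'‖_{L²}` makes the integral converge at `a`
and at infinity. Both are `O((ta)^{-3/4} ‖w'‖_{L²})`, with `ta` comparable to `(t|x|)^{1/2}`.
-/

section LpEstimates

variable {α E : Type*} [MeasurableSpace α] {μ : Measure α} [NormedAddCommGroup E]

lemma lpNorm_restrict_mono {f : α → E} {p : ENNReal} {S T : Set α} (hST : S ⊆ T)
    (hf : MemLp f p (μ.restrict T)) :
    lpNorm f p (μ.restrict S) ≤ lpNorm f p (μ.restrict T) := by
  have hμ := μ.restrict_mono_set hST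
  rw [← toReal_eLpNorm (hf.mono_measure hμ).1, ← toReal_eLpNorm hf.1]
  exact ENNReal.toReal_mono hf.eLpNorm_ne_top (eLpNorm_mono_measure f hμ)

lemma norm_integral_smul_le_lpNorm_mul_lpNorm {𝕜 : Type*} [NormedField 𝕜] [NormedSpace ℝ E]
    [NormedSpace 𝕜 E] {p q : ENNReal} [p.HolderConjugate q] {f : α → 𝕜} {g : α → E}
    (hf : MemLp f p μ) (hg : MemLp g q μ) :
    ‖∫ x, f x • g x ∂μ‖ ≤ lpNorm f p μ * lpNorm g q μ := by
  have hfg : MemLp (f • g) 1 μ := hg.smul hf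
  calc ‖∫ x, f x • g x ∂μ‖ ≤ ∫ x, ‖(f • g) x‖ ∂μ := norm_integral_le_integral_norm _
    _ = (eLpNorm (f • g) 1 μ).toReal := by
        rw [toReal_eLpNorm hfg.1, lpNorm_one_eq_integral_norm hfg.1]
    _ ≤ (eLpNorm f p μ * eLpNorm g q μ).toReal :=
        ENNReal.toReal_mono (ENNReal.mul_ne_top hf.eLpNorm_ne_top hg.eLpNorm_ne_top)
          (eLpNorm_smul_le_mul_eLpNorm hg.1 hf.1)
    _ = lpNorm f p μ * lpNorm g q μ := by
        rw [ENNReal.toReal_mul, toReal_eLpNorm hf.1, toReal_eLpNorm hg.1]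

lemma lpNorm_two_le_of_norm_sq_le {f : α → E} {g : α → ℝ} (hf : AEStronglyMeasurable f μ)
    (hg : Integrable g μ) (hfg : ∀ᵐ x ∂μ, ‖f x‖ ^ 2 ≤ g x) :
    lpNorm f 2 μ ≤ √(∫ x, g x ∂μ) := by
  have hnorm : lpNorm f 2 μ = √(∫ x, ‖f x‖ ^ 2 ∂μ) := by
    rw [lpNorm_eq_integral_norm_rpow_toReal (by simp) (by simp) hf, Real.sqrt_eq_rpow]
    norm_num
  rw [hnorm]
  exact Real.sqrt_le_sqrt
    (integral_mono_of_nonneg (Eventually.of_forall fun _ => by positivity) hg hfg)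

end LpEstimates

section DerivInLp

variable {E : Type*} [NormedAddCommGroup E] [NormedSpace ℝ E] {w : ℝ → E} {S : Set ℝ} {c d : ℝ}
  {p q : ENNReal}

lemma intervalIntegrable_deriv_of_memLp (hp : 1 ≤ p) (hS : S.OrdConnected)
    (hw' : MemLp (deriv w) p (volume.restrict S)) (hc : c ∈ S) (hd : d ∈ S) :
    IntervalIntegrable (deriv w) volume c d :=
  have : IsFiniteMeasure (volume.restrict (uIcc c d)) :=
    isFiniteMeasure_restrict.2 isCompact_uIcc.measure_ne_top
  (intervalIntegrable_iff' (by simp)).2 <| (hw'.mono_measure <| Measure.restrict_mono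
    (hS.uIcc_subset hc hd) le_rfl).integrable hp

lemma norm_sub_le_rpow_mul_lpNorm_deriv [CompleteSpace E] [p.HolderConjugate q] (hp : p ≠ ⊤)
    (hS : S.OrdConnected) (hw : ∀ r ∈ S, DifferentiableAt ℝ w r)
    (hw' : MemLp (deriv w) q (volume.restrict S)) (hc : c ∈ S) (hd : d ∈ S) :
    ‖w d - w c‖ ≤ |d - c| ^ p.toReal⁻¹ * lpNorm (deriv w) q (volume.restrict S) := by
  have hIcc : uIcc c d ⊆ S := hS.uIcc_subset hc hd
  have hIoc : uIoc c d ⊆ S := uIoc_subset_uIcc.trans hIcc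
  have : IsFiniteMeasure (volume.restrict (uIoc c d)) :=
    isFiniteMeasure_restrict.2 measure_Ioc_lt_top.ne
  have hp0 : p ≠ 0 := ENNReal.HolderConjugate.ne_zero p q
  rw [← intervalIntegral.integral_deriv_eq_sub (fun r hr => hw r (hIcc hr))
    (intervalIntegrable_deriv_of_memLp (ENNReal.HolderConjugate.one_le q p) hS hw' hc hd),
    intervalIntegral.norm_integral_eq_norm_integral_uIoc]
  calc ‖∫ r in uIoc c d, deriv w r‖ = ‖∫ r in uIoc c d, (1 : ℝ) • deriv w r‖ := by
        simp only [one_smul]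
    _ ≤ lpNorm (fun _ : ℝ => (1 : ℝ)) p (volume.restrict (uIoc c d)) *
          lpNorm (deriv w) q (volume.restrict (uIoc c d)) :=
        norm_integral_smul_le_lpNorm_mul_lpNorm (memLp_const 1)
          (hw'.mono_measure (Measure.restrict_mono hIoc le_rfl))
    _ ≤ |d - c| ^ p.toReal⁻¹ * lpNorm (deriv w) q (volume.restrict S) := by
        rw [lpNorm_const' hp0 hp, norm_one, one_mul, measureReal_restrict_apply_univ,
          uIoc, Real.volume_real_Ioc_of_le min_le_max, max_sub_min_eq_abs]
        gcongr
        exact lpNorm_restrict_mono hIoc hw'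

end DerivInLp

lemma norm_intervalIntegral_le_of_eventually {E : Type*} [NormedAddCommGroup E] [NormedSpace ℝ E]
    {f : ℝ → E} {a b B : ℝ} (hab : a < b) (hf : IntervalIntegrable f volume a b)
    (hB : ∀ᶠ c in 𝓝[>] a, ‖∫ p in c..b, f p‖ ≤ B) : ‖∫ p in a..b, f p‖ ≤ B := by
  have hcont : ContinuousOn (fun c => ∫ p in c..b, f p) (uIcc a b) :=
    intervalIntegral.continuousOn_primitive_interval_left
      ((intervalIntegrable_iff' (by simp)).1 hf)
  have hlim : Tendsto (fun c => ∫ p in c..b, f p) (𝓝[>] a) (𝓝 (∫ p in a..b, f p)) := by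
    rw [uIcc_of_le hab.le] at hcont
    rw [← nhdsWithin_Ioc_eq_nhdsGT hab]
    exact (hcont a (left_mem_Icc.2 hab.le)).mono Ioc_subset_Icc_self
  exact le_of_tendsto hlim.norm hB

section LorentzMoment

/-- The absolute moment `∫ |r|ˢ / (1 + r²) dr` of the Lorentzian; the constants of the
stationary-phase estimate are expressed through it. -/
def lorentzMoment (s : ℝ) : ℝ := ∫ r : ℝ, |r| ^ s * (1 + r ^ 2)⁻¹

variable {s b : ℝ}

lemma lorentzMoment_zero : lorentzMoment 0 = Real.pi := by
  simp only [lorentzMoment, Real.rpow_zero, one_mul, integral_univ_inv_one_add_sq]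

lemma lorentzMoment_nonneg (s : ℝ) : 0 ≤ lorentzMoment s :=
  integral_nonneg fun r => by positivity

lemma integrable_abs_rpow_mul_inv_one_add_sq (hs0 : 0 ≤ s) (hs1 : s < 1) :
    Integrable fun r : ℝ => |r| ^ s * (1 + r ^ 2)⁻¹ := by
  have hdom : Integrable fun r : ℝ => (1 + ‖r‖ ^ 2) ^ (-(2 - s) / 2) :=
    integrable_rpow_neg_one_add_norm_sq (by rw [Module.finrank_self]; norm_num; linarith)
  have hcont : Continuous fun r : ℝ => |r| ^ s * (1 + r ^ 2)⁻¹ :=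
    (continuous_abs.rpow_const fun _ => Or.inr hs0).mul
      (Continuous.inv₀ (by fun_prop) fun r => by positivity)
  refine hdom.mono' hcont.aestronglyMeasurable (Eventually.of_forall fun r => ?_)
  have hpos : (0 : ℝ) < 1 + r ^ 2 := by positivity
  have habs : |r| ≤ (1 + r ^ 2) ^ (1 / 2 : ℝ) := by
    rw [← Real.sqrt_eq_rpow]
    exact Real.abs_le_sqrt (by linarith)
  rw [Real.norm_of_nonneg (by positivity), Real.norm_eq_abs, sq_abs]
  calc |r| ^ s * (1 + r ^ 2)⁻¹ ≤ ((1 + r ^ 2) ^ (1 / 2 : ℝ)) ^ s * (1 + r ^ 2) ^ (-1 : ℝ) := by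
        rw [Real.rpow_neg_one]
        gcongr
    _ = (1 + r ^ 2) ^ (-(2 - s) / 2) := by
        rw [← Real.rpow_mul hpos.le, ← Real.rpow_add hpos]
        ring_nf

lemma abs_rpow_mul_inv_one_add_mul_sq (hb : 0 < b) (s p : ℝ) :
    |p| ^ s * (1 + b * p ^ 2)⁻¹ = b ^ (-s / 2) * (|√b * p| ^ s * (1 + (√b * p) ^ 2)⁻¹) := by
  have hcancel : b ^ (-s / 2) * b ^ (1 / 2 * s) = 1 := by
    rw [← Real.rpow_add hb, show -s / 2 + 1 / 2 * s = 0 by ring, Real.rpow_zero]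
  rw [abs_mul, abs_of_nonneg (Real.sqrt_nonneg b), mul_pow, Real.sq_sqrt hb.le,
    Real.mul_rpow (Real.sqrt_nonneg b) (abs_nonneg p), Real.sqrt_eq_rpow, ← Real.rpow_mul hb.le]
  linear_combination (-(|p| ^ s * (1 + b * p ^ 2)⁻¹)) * hcancel

lemma integrable_abs_sub_rpow_mul_inv_one_add_mul_sq (hs0 : 0 ≤ s) (hs1 : s < 1) (hb : 0 < b)
    (a : ℝ) : Integrable fun p : ℝ => |p - a| ^ s * (1 + b * (p - a) ^ 2)⁻¹ := by
  have hscaled := ((integrable_abs_rpow_mul_inv_one_add_sq hs0 hs1).comp_mul_left'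
    (Real.sqrt_pos.2 hb).ne').const_mul (b ^ (-s / 2))
  simp only [← abs_rpow_mul_inv_one_add_mul_sq hb] at hscaled
  exact hscaled.comp_sub_right a

lemma integral_abs_sub_rpow_mul_inv_one_add_mul_sq (hb : 0 < b) (s a : ℝ) :
    ∫ p : ℝ, |p - a| ^ s * (1 + b * (p - a) ^ 2)⁻¹ = b ^ (-(s + 1) / 2) * lorentzMoment s := by
  have hexp : b ^ (-(s + 1) / 2) = b ^ (-s / 2) * (√b)⁻¹ := by
    rw [Real.sqrt_eq_rpow, ← Real.rpow_neg hb.le, ← Real.rpow_add hb]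
    ring_nf
  rw [integral_sub_right_eq_self (fun p : ℝ => |p| ^ s * (1 + b * p ^ 2)⁻¹) a]
  simp only [abs_rpow_mul_inv_one_add_mul_sq hb]
  rw [integral_const_mul, Measure.integral_comp_mul_left (fun r : ℝ => |r| ^ s * (1 + r ^ 2)⁻¹),
    abs_of_nonneg (by positivity), smul_eq_mul, ← mul_assoc, hexp, lorentzMoment]

lemma integrable_inv_one_add_mul_sq (hb : 0 < b) (a : ℝ) :
    Integrable fun p : ℝ => (1 + b * (p - a) ^ 2)⁻¹ := by
  simpa only [Real.rpow_zero, one_mul] using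
    integrable_abs_sub_rpow_mul_inv_one_add_mul_sq le_rfl one_pos hb a

lemma integral_inv_one_add_mul_sq (hb : 0 < b) (a : ℝ) :
    ∫ p : ℝ, (1 + b * (p - a) ^ 2)⁻¹ = b ^ (-(1 / 2) : ℝ) * Real.pi := by
  simpa only [Real.rpow_zero, one_mul, zero_add, neg_div, lorentzMoment_zero] using
    integral_abs_sub_rpow_mul_inv_one_add_mul_sq hb 0 a

end LorentzMoment

section StationaryPhase

/-- The oscillating factor `e^{iφ}` of an oscillatory integral with phase `φ`. -/
def osc (φ : ℝ → ℝ) (p : ℝ) : ℂ := Complex.exp (Complex.I * (φ p : ℂ))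

/-- The derivative of `φ` along the dilations centred at `a`. Near a nondegenerate stationary
point `a` it is quadratic, so `1 + i * dilationDeriv φ a` records both the stationary region and
the oscillatory one. -/
def dilationDeriv (φ : ℝ → ℝ) (a p : ℝ) : ℝ := (p - a) * deriv φ p

/-- An approximate primitive of `e^{iφ}`: it is obtained by writing
`(1 + i θ) e^{iφ} = ((p - a) e^{iφ})'` with `θ = dilationDeriv φ a`. -/
def approxPrimitive (φ : ℝ → ℝ) (a p : ℝ) : ℂ :=
  osc φ p * (p - a) / (1 + Complex.I * dilationDeriv φ a p)

/-- The error in `(approxPrimitive φ a)' = e^{iφ} (1 + relError φ a)`. -/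
def relError (φ : ℝ → ℝ) (a p : ℝ) : ℂ :=
  -Complex.I * dilationDeriv (dilationDeriv φ a) a p / (1 + Complex.I * dilationDeriv φ a p) ^ 2

variable {φ : ℝ → ℝ} {a b c d p K : ℝ} {S : Set ℝ}

@[simp] lemma norm_osc (φ : ℝ → ℝ) (p : ℝ) : ‖osc φ p‖ = 1 := by
  rw [osc, mul_comm, Complex.norm_exp_ofReal_mul_I]

lemma continuous_osc (hφ : Continuous φ) : Continuous (osc φ) := by
  unfold osc
  fun_prop

lemma hasDerivAt_osc {φ' : ℝ} (hφ : HasDerivAt φ φ' p) :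
    HasDerivAt (osc φ) (osc φ p * (Complex.I * φ')) p :=
  (hφ.ofReal_comp.const_mul Complex.I).cexp

lemma contDiff_dilationDeriv {m n : WithTop ℕ∞} (hφ : ContDiff ℝ m φ) (hmn : n + 1 ≤ m)
    (a : ℝ) : ContDiff ℝ n (dilationDeriv φ a) :=
  (contDiff_id.sub contDiff_const).mul (contDiff_succ_iff_deriv.1 (hφ.of_le hmn)).2.2

lemma norm_one_add_I_mul_sq (r : ℝ) : ‖1 + Complex.I * (r : ℂ)‖ ^ 2 = 1 + r ^ 2 := by
  rw [← Complex.normSq_eq_norm_sq, Complex.normSq_apply]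
  simp only [Complex.add_re, Complex.one_re, Complex.mul_re, Complex.I_re, Complex.ofReal_re,
    Complex.I_im, Complex.ofReal_im, Complex.add_im, Complex.one_im, Complex.mul_im]
  ring

lemma one_add_I_mul_ne_zero (r : ℝ) : 1 + Complex.I * (r : ℂ) ≠ 0 := fun h => by
  have hsq := norm_one_add_I_mul_sq r
  rw [h, norm_zero] at hsq
  nlinarith [sq_nonneg r]

lemma hasDerivAt_approxPrimitive (hφ : ContDiff ℝ 2 φ) (a p : ℝ) :
    HasDerivAt (approxPrimitive φ a) (osc φ p * (1 + relError φ a p)) p := by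
  have hφ' : HasDerivAt φ (deriv φ p) p := (hφ.differentiable two_ne_zero p).hasDerivAt
  have hθ' : HasDerivAt (dilationDeriv φ a) (deriv (dilationDeriv φ a) p) p :=
    ((contDiff_dilationDeriv hφ one_add_one_eq_two.le a).differentiable one_ne_zero p).hasDerivAt
  have hosc := hasDerivAt_osc hφ'
  have hlin : HasDerivAt (fun p : ℝ => (p : ℂ) - a) 1 p :=
    (hasDerivAt_id p).ofReal_comp.sub_const (a : ℂ)
  have hden := (hθ'.ofReal_comp.const_mul Complex.I).const_add 1
  have hden0 := one_add_I_mul_ne_zero (dilationDeriv φ a p)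
  have hnum : osc φ p * (Complex.I * ((deriv φ p : ℝ) : ℂ)) * (p - a) + osc φ p * 1 =
      osc φ p * (1 + Complex.I * dilationDeriv φ a p) := by
    rw [dilationDeriv, Complex.ofReal_mul, Complex.ofReal_sub]
    ring
  have hθ₂ : (dilationDeriv (dilationDeriv φ a) a p : ℂ) =
      (p - a) * ((deriv (dilationDeriv φ a) p : ℝ) : ℂ) := by
    rw [dilationDeriv, Complex.ofReal_mul, Complex.ofReal_sub]
  refine ((hosc.mul hlin).div hden hden0).congr_deriv ?_
  rw [hnum, relError, hθ₂]
  generalize 1 + Complex.I * (dilationDeriv φ a p : ℂ) = D at hden0 ⊢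
  simp only [Pi.mul_apply]
  field_simp
  ring

lemma continuous_approxPrimitive (hφ : ContDiff ℝ 2 φ) (a : ℝ) :
    Continuous (approxPrimitive φ a) :=
  continuous_iff_continuousAt.2 fun p => (hasDerivAt_approxPrimitive hφ a p).continuousAt

lemma continuous_relError (hφ : ContDiff ℝ 2 φ) (a : ℝ) : Continuous (relError φ a) := by
  have hθ : ContDiff ℝ 1 (dilationDeriv φ a) := contDiff_dilationDeriv hφ one_add_one_eq_two.le a
  have hθ₂ : ContDiff ℝ 0 (dilationDeriv (dilationDeriv φ a) a) :=
    contDiff_dilationDeriv hθ (zero_add 1).le a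
  have hθc := hθ.continuous
  have hθ₂c := hθ₂.continuous
  exact Continuous.div (by fun_prop) (by fun_prop)
    fun p => pow_ne_zero 2 (one_add_I_mul_ne_zero _)

variable {E : Type*} [NormedAddCommGroup E] [NormedSpace ℂ E]

lemma intervalIntegrable_osc_smul_of_norm_le {w : ℝ → E} {M : ℝ} (hφ : Continuous φ) (hcd : c ≤ d)
    (hw : ContinuousOn w (Ioi c)) (hM : ∀ p ∈ Ioi c, ‖w p‖ ≤ M) :
    IntervalIntegrable (fun p => osc φ p • w p) volume c d := by
  have hsub : Ioc c d ⊆ Ioi c := Ioc_subset_Ioi_self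
  rw [intervalIntegrable_iff_integrableOn_Ioc_of_le hcd]
  refine IntegrableOn.of_bound measure_Ioc_lt_top
    (((continuous_osc hφ).continuousOn.smul (hw.mono hsub)).aestronglyMeasurable
      measurableSet_Ioc) M ?_
  filter_upwards [ae_restrict_mem measurableSet_Ioc] with p hp
  rw [norm_smul, norm_osc, one_mul]
  exact hM p (hsub hp)

lemma integral_osc_smul_sub [CompleteSpace E] {w : ℝ → E} (hφ : Continuous φ)
    (hw : IntervalIntegrable (fun p => osc φ p • w p) volume c d) (z : E) :
    ∫ p in c..d, osc φ p • (w p - z) =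
      (∫ p in c..d, osc φ p • w p) - (∫ p in c..d, osc φ p) • z := by
  have hz : IntervalIntegrable (fun p => osc φ p • z) volume c d :=
    ((continuous_osc hφ).smul continuous_const).intervalIntegrable c d
  simp only [smul_sub]
  rw [intervalIntegral.integral_sub hw hz, intervalIntegral.integral_smul_const]

lemma integral_osc_smul [CompleteSpace E] (hφ : ContDiff ℝ 2 φ) (a : ℝ) {v : ℝ → E}
    (hv : ∀ p ∈ uIcc c d, DifferentiableAt ℝ v p) (hv' : IntervalIntegrable (deriv v) volume c d) :
    ∫ p in c..d, osc φ p • v p =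
      approxPrimitive φ a d • v d - approxPrimitive φ a c • v c
        - (∫ p in c..d, approxPrimitive φ a p • deriv v p)
        - ∫ p in c..d, (osc φ p * relError φ a p) • v p := by
  have hosc := continuous_osc hφ.continuous
  have herr := hosc.mul (continuous_relError hφ a)
  have hvc : ContinuousOn v (uIcc c d) := fun p hp => (hv p hp).continuousAt.continuousWithinAt
  have hparts := intervalIntegral.integral_smul_deriv_eq_deriv_smul
    (fun p _ => hasDerivAt_approxPrimitive hφ a p) (fun p hp => (hv p hp).hasDerivAt)
    ((hosc.mul (continuous_const.add (continuous_relError hφ a))).intervalIntegrable c d) hv'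
  have hsplit : ∫ p in c..d, (osc φ p * (1 + relError φ a p)) • v p =
      (∫ p in c..d, osc φ p • v p) + ∫ p in c..d, (osc φ p * relError φ a p) • v p := by
    simp only [mul_add, mul_one, add_smul]
    exact intervalIntegral.integral_add (hosc.continuousOn.smul hvc).intervalIntegrable
      (herr.continuousOn.smul hvc).intervalIntegrable
  rw [hparts, hsplit]
  abel

/-- On `S` the phase `φ` has at most the stationary point `a`, around which it is at least as
convex as `b p²`; the bound on the second dilation derivative is the scale-invariant form of
symbol-type regularity. -/
structure IsStationaryPhaseOn (φ : ℝ → ℝ) (S : Set ℝ) (a b K : ℝ) : Prop where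
  contDiff : ContDiff ℝ 2 φ
  pos : 0 < b
  nonneg : 0 ≤ K
  mul_sq_le : ∀ p ∈ S, b * (p - a) ^ 2 ≤ dilationDeriv φ a p
  abs_dilationDeriv_le : ∀ p ∈ S,
    |dilationDeriv (dilationDeriv φ a) a p| ≤ K * dilationDeriv φ a p

lemma norm_approxPrimitive_sq (φ : ℝ → ℝ) (a p : ℝ) :
    ‖approxPrimitive φ a p‖ ^ 2 = (p - a) ^ 2 / (1 + dilationDeriv φ a p ^ 2) := by
  rw [approxPrimitive, norm_div, norm_mul, norm_osc, one_mul, div_pow, norm_one_add_I_mul_sq,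
    ← Complex.ofReal_sub, Complex.norm_real, Real.norm_eq_abs, sq_abs]

lemma norm_approxPrimitive_le_inv (hp : deriv φ p ≠ 0) :
    ‖approxPrimitive φ a p‖ ≤ |deriv φ p|⁻¹ := by
  refine le_of_sq_le_sq ?_ (by positivity)
  have hpos : 0 < deriv φ p ^ 2 := by positivity
  rw [norm_approxPrimitive_sq, inv_pow, sq_abs, ← one_div,
    div_le_div_iff₀ (by positivity) hpos, dilationDeriv]
  nlinarith

namespace IsStationaryPhaseOn

lemma mono {T : Set ℝ} (h : IsStationaryPhaseOn φ S a b K) (hT : T ⊆ S) :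
    IsStationaryPhaseOn φ T a b K where
  contDiff := h.contDiff
  pos := h.pos
  nonneg := h.nonneg
  mul_sq_le p hp := h.mul_sq_le p (hT hp)
  abs_dilationDeriv_le p hp := h.abs_dilationDeriv_le p (hT hp)

lemma norm_approxPrimitive_sq_le (h : IsStationaryPhaseOn φ S a b K) (hp : p ∈ S) :
    ‖approxPrimitive φ a p‖ ^ 2 ≤ 2 / b * (1 + b * (p - a) ^ 2)⁻¹ := by
  have hb := h.pos
  have hθ := h.mul_sq_le p hp
  have hs : 0 ≤ b * (p - a) ^ 2 := by positivity
  rw [norm_approxPrimitive_sq, ← div_eq_mul_inv, div_div,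
    div_le_div_iff₀ (by positivity) (by positivity)]
  nlinarith [sq_nonneg (dilationDeriv φ a p - 1)]

lemma norm_relError_le (h : IsStationaryPhaseOn φ S a b K) (hp : p ∈ S) :
    ‖relError φ a p‖ ≤ 2 * K * (1 + b * (p - a) ^ 2)⁻¹ := by
  have hb := h.pos
  have hK := h.nonneg
  have hθ := h.mul_sq_le p hp
  have hs : 0 ≤ b * (p - a) ^ 2 := by positivity
  set θ := dilationDeriv φ a p
  calc ‖relError φ a p‖ = |dilationDeriv (dilationDeriv φ a) a p| / (1 + θ ^ 2) := by
        rw [relError, norm_div, norm_pow, norm_one_add_I_mul_sq, norm_mul, norm_neg,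
          Complex.norm_I, one_mul, Complex.norm_real, Real.norm_eq_abs]
    _ ≤ K * θ / (1 + θ ^ 2) := by gcongr; exact h.abs_dilationDeriv_le p hp
    _ ≤ K * (2 / (1 + b * (p - a) ^ 2)) := by
        rw [mul_div_assoc]
        gcongr ?_ * ?_
        rw [div_le_div_iff₀ (by positivity) (by positivity)]
        nlinarith [sq_nonneg (θ - 1)]
    _ = 2 * K * (1 + b * (p - a) ^ 2)⁻¹ := by ring

lemma memLp_approxPrimitive (h : IsStationaryPhaseOn φ S a b K) (hS : MeasurableSet S) :
    MemLp (approxPrimitive φ a) 2 (volume.restrict S) := by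
  have hP := continuous_approxPrimitive h.contDiff a
  refine (memLp_two_iff_integrable_sq_norm hP.aestronglyMeasurable).2 ?_
  refine ((integrable_inv_one_add_mul_sq h.pos a).const_mul (2 / b)).restrict.mono'
    (hP.norm.pow 2).aestronglyMeasurable ?_
  filter_upwards [ae_restrict_mem hS] with p hp
  rw [Real.norm_of_nonneg (by positivity)]
  exact h.norm_approxPrimitive_sq_le hp

lemma lpNorm_approxPrimitive_le (h : IsStationaryPhaseOn φ S a b K) (hS : MeasurableSet S) :
    lpNorm (approxPrimitive φ a) 2 (volume.restrict S) ≤ √(2 * Real.pi) * b ^ (-(3 / 4) : ℝ) := by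
  have hb := h.pos
  have hint := (integrable_inv_one_add_mul_sq h.pos a).const_mul (2 / b)
  have htotal : ∫ p : ℝ, 2 / b * (1 + b * (p - a) ^ 2)⁻¹ =
      2 * Real.pi * (b ^ (-(3 / 4) : ℝ)) ^ 2 := by
    rw [integral_const_mul, integral_inv_one_add_mul_sq hb, ← Real.rpow_mul_natCast hb.le,
      show (-(3 / 4) * (2 : ℕ) : ℝ) = -1 + -(1 / 2) by norm_num, Real.rpow_add hb,
      Real.rpow_neg_one]
    ring
  calc lpNorm (approxPrimitive φ a) 2 (volume.restrict S)
      ≤ √(∫ p in S, 2 / b * (1 + b * (p - a) ^ 2)⁻¹) :=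
        lpNorm_two_le_of_norm_sq_le (continuous_approxPrimitive h.contDiff a).aestronglyMeasurable
          hint.restrict
          ((ae_restrict_mem hS).mono fun p hp => h.norm_approxPrimitive_sq_le hp)
    _ ≤ √(∫ p : ℝ, 2 / b * (1 + b * (p - a) ^ 2)⁻¹) := Real.sqrt_le_sqrt <|
        setIntegral_le_integral hint (Eventually.of_forall fun p => by positivity)
    _ = √(2 * Real.pi) * b ^ (-(3 / 4) : ℝ) := by
        rw [htotal, Real.sqrt_mul (by positivity), Real.sqrt_sq (by positivity)]

lemma norm_integral_approxPrimitive_smul_le (h : IsStationaryPhaseOn φ S a b K)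
    (hS : S.OrdConnected) (hc : c ∈ S) (hd : d ∈ S) {g : ℝ → E}
    (hg : MemLp g 2 (volume.restrict S)) :
    ‖∫ p in c..d, approxPrimitive φ a p • g p‖ ≤
      √(2 * Real.pi) * b ^ (-(3 / 4) : ℝ) * lpNorm g 2 (volume.restrict S) := by
  have hsub : uIoc c d ⊆ S := uIoc_subset_uIcc.trans (hS.uIcc_subset hc hd)
  have hμ := Measure.restrict_mono (μ := volume) hsub le_rfl
  have hP := h.memLp_approxPrimitive hS.measurableSet
  rw [intervalIntegral.norm_integral_eq_norm_integral_uIoc]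
  calc ‖∫ p in uIoc c d, approxPrimitive φ a p • g p‖
      ≤ lpNorm (approxPrimitive φ a) 2 (volume.restrict (uIoc c d)) *
          lpNorm g 2 (volume.restrict (uIoc c d)) :=
        norm_integral_smul_le_lpNorm_mul_lpNorm (hP.mono_measure hμ) (hg.mono_measure hμ)
    _ ≤ lpNorm (approxPrimitive φ a) 2 (volume.restrict S) * lpNorm g 2 (volume.restrict S) := by
        gcongr
        exacts [lpNorm_nonneg, lpNorm_nonneg, lpNorm_restrict_mono hsub hP,
          lpNorm_restrict_mono hsub hg]
    _ ≤ √(2 * Real.pi) * b ^ (-(3 / 4) : ℝ) * lpNorm g 2 (volume.restrict S) := by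
        gcongr
        exacts [lpNorm_nonneg, h.lpNorm_approxPrimitive_le hS.measurableSet]

lemma norm_integral_relError_smul_le (h : IsStationaryPhaseOn φ S a b K)
    (hS : S.OrdConnected) (hc : c ∈ S) (hd : d ∈ S) {v : ℝ → E} {s D : ℝ}
    (hs0 : 0 ≤ s) (hs1 : s < 1) (hD : 0 ≤ D)
    (hv : ∀ p ∈ S, ‖v p‖ ≤ |p - a| ^ s * D) :
    ‖∫ p in c..d, (osc φ p * relError φ a p) • v p‖ ≤
      2 * K * lorentzMoment s * b ^ (-(s + 1) / 2) * D := by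
  have hb := h.pos
  have hK := h.nonneg
  have hsub : uIoc c d ⊆ S := uIoc_subset_uIcc.trans (hS.uIcc_subset hc hd)
  have hint := (integrable_abs_sub_rpow_mul_inv_one_add_mul_sq hs0 hs1 hb a).const_mul (2 * K * D)
  rw [intervalIntegral.norm_integral_eq_norm_integral_uIoc]
  calc ‖∫ p in uIoc c d, (osc φ p * relError φ a p) • v p‖
      ≤ ∫ p in uIoc c d, 2 * K * D * (|p - a| ^ s * (1 + b * (p - a) ^ 2)⁻¹) := by
        refine norm_integral_le_of_norm_le hint.restrict ?_
        filter_upwards [ae_restrict_mem measurableSet_uIoc] with p hp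
        rw [norm_smul, norm_mul, norm_osc, one_mul]
        calc ‖relError φ a p‖ * ‖v p‖
            ≤ 2 * K * (1 + b * (p - a) ^ 2)⁻¹ * (|p - a| ^ s * D) := by
              gcongr
              exacts [h.norm_relError_le (hsub hp), hv p (hsub hp)]
          _ = 2 * K * D * (|p - a| ^ s * (1 + b * (p - a) ^ 2)⁻¹) := by ring
    _ ≤ ∫ p : ℝ, 2 * K * D * (|p - a| ^ s * (1 + b * (p - a) ^ 2)⁻¹) :=
        setIntegral_le_integral hint (Eventually.of_forall fun p => by positivity)
    _ = 2 * K * lorentzMoment s * b ^ (-(s + 1) / 2) * D := by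
        rw [integral_const_mul, integral_abs_sub_rpow_mul_inv_one_add_mul_sq hb]
        ring

theorem norm_integral_osc_smul_sub_le [CompleteSpace E] (h : IsStationaryPhaseOn φ S a b K)
    (hS : S.OrdConnected) (ha : a ∈ S) (hc : c ∈ S) (hd : d ∈ S) {w : ℝ → E}
    (hw : ∀ p ∈ S, DifferentiableAt ℝ w p)
    (hw' : MemLp (deriv w) 2 (volume.restrict S)) :
    ‖∫ p in c..d, osc φ p • (w p - w a)‖ ≤
      ‖approxPrimitive φ a d‖ * ‖w d - w a‖ + ‖approxPrimitive φ a c‖ * ‖w c - w a‖ +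
        (√(2 * Real.pi) + 2 * K * lorentzMoment (1 / 2)) * b ^ (-(3 / 4) : ℝ) *
          lpNorm (deriv w) 2 (volume.restrict S) := by
  have hderiv : deriv (fun p => w p - w a) = deriv w := funext fun p => deriv_sub_const _
  have hholder : ∀ p ∈ S, ‖w p - w a‖ ≤
      |p - a| ^ (1 / 2 : ℝ) * lpNorm (deriv w) 2 (volume.restrict S) := fun p hp => by
    simpa using norm_sub_le_rpow_mul_lpNorm_deriv (p := 2) (by simp) hS hw hw' ha hp
  have hmain := h.norm_integral_approxPrimitive_smul_le hS hc hd hw'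
  have herr := h.norm_integral_relError_smul_le hS hc hd (by norm_num) (by norm_num)
    lpNorm_nonneg hholder
  rw [integral_osc_smul h.contDiff a
    (fun p hp => (hw p (hS.uIcc_subset hc hd hp)).sub_const _)
    (by rw [hderiv]; exact intervalIntegrable_deriv_of_memLp one_le_two hS hw' hc hd), hderiv]
  rw [show (-(1 / 2 + 1) / 2 : ℝ) = -(3 / 4) by norm_num] at herr
  refine (norm_sub_le_of_le (norm_sub_le_of_le (norm_sub_le_of_le
    (norm_smul_le _ _) (norm_smul_le _ _)) hmain) herr).trans_eq ?_
  ring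

theorem exists_tendsto_integral_osc (h : IsStationaryPhaseOn φ (Ici c) a b K) :
    ∃ L : ℂ, Tendsto (fun R => ∫ p in c..R, osc φ p) atTop (𝓝 L) := by
  have hb := h.pos
  have hP : Tendsto (approxPrimitive φ a) atTop (𝓝 0) := by
    have hden : Tendsto (fun p : ℝ => 1 + b * (p - a) ^ 2) atTop atTop :=
      tendsto_atTop_add_const_left _ _ (((tendsto_pow_atTop two_ne_zero).comp
        (tendsto_atTop_add_const_right _ (-a) tendsto_id)).const_mul_atTop hb)
    have hsqrt := ((tendsto_inv_atTop_zero.comp hden).const_mul (2 / b)).sqrt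
    rw [mul_zero, Real.sqrt_zero] at hsqrt
    refine squeeze_zero_norm' ((eventually_ge_atTop c).mono fun p hp => ?_) hsqrt
    exact Real.le_sqrt_of_sq_le (h.norm_approxPrimitive_sq_le hp)
  have herr : IntegrableOn (fun p => osc φ p * relError φ a p) (Ioi c) := by
    refine ((integrable_inv_one_add_mul_sq h.pos a).const_mul (2 * K)).restrict.mono'
      ((continuous_osc h.contDiff.continuous).mul
        (continuous_relError h.contDiff a)).aestronglyMeasurable ?_
    filter_upwards [ae_restrict_mem measurableSet_Ioi] with p hp
    rw [norm_mul, norm_osc, one_mul]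
    exact h.norm_relError_le (Ioi_subset_Ici_self hp)
  have hparts (R : ℝ) : ∫ p in c..R, osc φ p = approxPrimitive φ a R - approxPrimitive φ a c
      - ∫ p in c..R, osc φ p * relError φ a p := by
    simpa using integral_osc_smul (c := c) (d := R) (v := fun _ => (1 : ℂ)) h.contDiff a
      (fun _ _ => differentiableAt_const _) (by simp)
  simp only [hparts]
  exact ⟨_, (hP.sub_const _).sub (intervalIntegral_tendsto_integral_Ioi c herr tendsto_id)⟩

end IsStationaryPhaseOn

end StationaryPhase

section Airy

/-- The phase of the Fourier representation of a solution of the Airy equation with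
profile `w`. -/
def airyPhase (t x p : ℝ) : ℝ := p * x + p ^ 3 * t

variable {t x a p R M : ℝ}

lemma contDiff_airyPhase {n : WithTop ℕ∞} (t x : ℝ) : ContDiff ℝ n (airyPhase t x) := by
  unfold airyPhase
  fun_prop

lemma deriv_airyPhase (t a p : ℝ) :
    deriv (airyPhase t (-(3 * t * a ^ 2))) p = 3 * t * (p - a) * (p + a) := by
  have hderiv := ((hasDerivAt_id p).mul_const (-(3 * t * a ^ 2))).add
    ((hasDerivAt_pow 3 p).mul_const t)
  refine hderiv.deriv.trans ?_
  norm_num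
  ring

lemma dilationDeriv_airyPhase (t a p : ℝ) :
    dilationDeriv (airyPhase t (-(3 * t * a ^ 2))) a p = 3 * t * (p - a) ^ 2 * (p + a) := by
  rw [dilationDeriv, deriv_airyPhase]
  ring

lemma dilationDeriv_dilationDeriv_airyPhase (t a p : ℝ) :
    dilationDeriv (dilationDeriv (airyPhase t (-(3 * t * a ^ 2))) a) a p =
      3 * t * (p - a) ^ 2 * (3 * p + a) := by
  have hderiv := ((((hasDerivAt_id p).sub_const a).pow 2).const_mul (3 * t)).mul
    ((hasDerivAt_id p).add_const a)
  rw [dilationDeriv, funext (dilationDeriv_airyPhase t a)]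
  refine (congrArg ((p - a) * ·) hderiv.deriv).trans ?_
  norm_num
  ring

lemma isStationaryPhaseOn_airyPhase (ht : 0 < t) (ha : 0 < a) :
    IsStationaryPhaseOn (airyPhase t (-(3 * t * a ^ 2))) (Ici 0) a (3 * t * a) 3 where
  contDiff := contDiff_airyPhase _ _
  pos := by positivity
  nonneg := by norm_num
  mul_sq_le p hp := by
    have hp : 0 ≤ p := hp
    rw [dilationDeriv_airyPhase]
    have : 0 ≤ 3 * t * (p - a) ^ 2 * p := by positivity
    linarith
  abs_dilationDeriv_le p hp := by
    have hp : 0 ≤ p := hp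
    rw [dilationDeriv_dilationDeriv_airyPhase, dilationDeriv_airyPhase,
      abs_of_nonneg (by positivity)]
    have : 0 ≤ 3 * t * (p - a) ^ 2 * a := by positivity
    linarith

lemma norm_approxPrimitive_airyPhase_le (ht : 0 < t) (ha : 0 < a) (hp : 0 ≤ p)
    (hpa : a / 2 ≤ |p - a|) :
    ‖approxPrimitive (airyPhase t (-(3 * t * a ^ 2))) a p‖ ≤ (t * a ^ 2)⁻¹ := by
  have hderiv : t * a ^ 2 ≤ |deriv (airyPhase t (-(3 * t * a ^ 2))) p| := by
    rw [deriv_airyPhase, abs_mul, abs_mul, abs_of_pos (by positivity : 0 < 3 * t),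
      abs_of_pos (by positivity : 0 < p + a)]
    calc t * a ^ 2 ≤ 3 * t * (a / 2) * a := by nlinarith [mul_pos ht (pow_pos ha 2)]
      _ ≤ 3 * t * |p - a| * (p + a) := by gcongr; linarith
  have hpos : 0 < t * a ^ 2 := by positivity
  exact (norm_approxPrimitive_le_inv (abs_pos.1 (hpos.trans_le hderiv))).trans (by gcongr)

lemma AiP_eq_integral_osc (ht : 0 < t) (hR : 0 ≤ R) (x : ℝ) :
    AiP (x / t ^ (1 / 3 : ℝ)) (t ^ (1 / 3 : ℝ) * R) =
      ((t ^ (1 / 3 : ℝ) / Real.pi : ℝ) : ℂ) * ∫ p in (0 : ℝ)..R, osc (airyPhase t x) p := by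
  set τ := t ^ (1 / 3 : ℝ) with hτ
  have hτ0 : 0 < τ := Real.rpow_pos_of_pos ht _
  have hτ3 : τ ^ 3 = t := by
    rw [hτ, ← Real.rpow_natCast, ← Real.rpow_mul ht.le]
    norm_num
  have hphase : ∀ p, airyPhase 1 (x / τ) (τ * p) = airyPhase t x p := fun p => by
    rw [airyPhase, airyPhase, mul_pow, hτ3]
    field_simp
  have hosc : ∀ p, osc (airyPhase 1 (x / τ)) (τ * p) = osc (airyPhase t x) p := fun p => by
    rw [osc, osc, hphase]
  have hAiP : AiP (x / τ) (τ * R) =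
      ((1 / Real.pi : ℝ) : ℂ) * ∫ p in (0 : ℝ)..τ * R, osc (airyPhase 1 (x / τ)) p := by
    rw [intervalIntegral.integral_of_le (by positivity)]
    simp only [AiP, osc, airyPhase, mul_one]
  have hsubst : ∫ p in (0 : ℝ)..τ * R, osc (airyPhase 1 (x / τ)) p =
      τ • ∫ p in (0 : ℝ)..R, osc (airyPhase 1 (x / τ)) (τ * p) := by
    rw [intervalIntegral.smul_integral_comp_mul_left, mul_zero]
  rw [hAiP, hsubst, Complex.real_smul, ← mul_assoc, ← Complex.ofReal_mul, one_div_mul_eq_div]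
  simp only [hosc]

lemma AiFock_eq_of_tendsto (ht : 0 < t) {L : ℂ}
    (hL : Tendsto (fun R => ∫ p in (0 : ℝ)..R, osc (airyPhase t x) p) atTop (𝓝 L)) :
    AiFock (x / t ^ (1 / 3 : ℝ)) = ((t ^ (1 / 3 : ℝ) / Real.pi : ℝ) : ℂ) * L := by
  have hτ : 0 < t ^ (1 / 3 : ℝ) := Real.rpow_pos_of_pos ht _
  have hscale : Tendsto (fun R : ℝ => (t ^ (1 / 3 : ℝ))⁻¹ * R) atTop atTop :=
    tendsto_id.const_mul_atTop (inv_pos.2 hτ)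
  refine Tendsto.limUnder_eq (((hL.comp hscale).const_mul _).congr' ?_)
  filter_upwards [eventually_ge_atTop 0] with R hR
  rw [Function.comp_apply, ← AiP_eq_integral_osc ht (by positivity),
    mul_inv_cancel_left₀ hτ.ne']

lemma norm_integral_osc_airyPhase_smul_sub_le {E : Type*} [NormedAddCommGroup E]
    [NormedSpace ℂ E] [CompleteSpace E] (ht : 0 < t) (ha : 0 < a) (hR : 2 * a ≤ R) {w : ℝ → E}
    (hM : ∀ p ∈ Ioi 0, ‖w p‖ ≤ M) (hw : ∀ p ∈ Ioi 0, DifferentiableAt ℝ w p)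
    (hw' : MemLp (deriv w) 2 (volume.restrict (Ioi 0))) :
    ‖∫ p in (0 : ℝ)..R, osc (airyPhase t (-(3 * t * a ^ 2))) p • (w p - w a)‖ ≤
      4 * M / (t * a ^ 2) + (√(2 * Real.pi) + 6 * lorentzMoment (1 / 2)) *
        (3 * t * a) ^ (-(3 / 4) : ℝ) * lpNorm (deriv w) 2 (volume.restrict (Ioi 0)) := by
  have hphase := (isStationaryPhaseOn_airyPhase ht ha).mono Ioi_subset_Ici_self
  have hbdd : ∀ p ∈ Ioi 0, ‖w p - w a‖ ≤ M + M := fun p hp => norm_sub_le_of_le (hM p hp) (hM a ha)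
  have hbdry : ∀ p ∈ Ioi 0, a / 2 ≤ |p - a| →
      ‖approxPrimitive (airyPhase t (-(3 * t * a ^ 2))) a p‖ * ‖w p - w a‖ ≤
        (t * a ^ 2)⁻¹ * (M + M) := fun p hp hpa => by
    gcongr
    · exact norm_approxPrimitive_airyPhase_le ht ha (le_of_lt hp) hpa
    · exact hbdd p hp
  have hcont : ContinuousOn (fun p => w p - w a) (Ioi 0) := fun p hp =>
    ((hw p hp).continuousAt.sub continuousAt_const).continuousWithinAt
  have hR0 : 0 < R := by linarith
  refine norm_intervalIntegral_le_of_eventually hR0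
    (intervalIntegrable_osc_smul_of_norm_le hphase.contDiff.continuous hR0.le hcont hbdd) ?_
  filter_upwards [Ioo_mem_nhdsGT (half_pos ha)] with c ⟨hc0, hca⟩
  refine (hphase.norm_integral_osc_smul_sub_le ordConnected_Ioi ha hc0 hR0 hw hw').trans ?_
  have hbdryR := hbdry R hR0 (by rw [abs_of_pos] <;> linarith)
  have hbdryc := hbdry c hc0 (by rw [abs_of_neg] <;> linarith)
  rw [show 4 * M / (t * a ^ 2) = (t * a ^ 2)⁻¹ * (M + M) + (t * a ^ 2)⁻¹ * (M + M) by ring,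
    show (6 : ℝ) = 2 * 3 by norm_num]
  gcongr

lemma physPartial_eq_integral_osc (hR : 0 ≤ R) (w : ℝ → ℂ) (t x : ℝ) :
    physPartial w t x R = 1 / Real.pi * (∫ p in (0 : ℝ)..R, osc (airyPhase t x) p • w p).re := by
  rw [intervalIntegral.integral_of_le hR]
  rfl

lemma dL2_eq_lpNorm {w : ℝ → ℂ} (hw' : MemLp (deriv w) 2 (volume.restrict (Ioi 0))) :
    dL2 w = lpNorm (deriv w) 2 (volume.restrict (Ioi 0)) :=
  toReal_eLpNorm hw'.1

theorem abs_sub_re_AiFock_mul_le (ht : 0 < t) (ha : 0 < a) {w : ℝ → ℂ}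
    (hM : ∀ p ∈ Ioi 0, ‖w p‖ ≤ M) (hw : ∀ p ∈ Ioi 0, DifferentiableAt ℝ w p)
    (hw' : MemLp (deriv w) 2 (volume.restrict (Ioi 0))) {v : ℝ}
    (hv : Tendsto (physPartial w t (-(3 * t * a ^ 2))) atTop (𝓝 v)) :
    |v - t ^ (-(1 / 3 : ℝ)) * (AiFock (-(3 * t * a ^ 2) / t ^ (1 / 3 : ℝ)) * w a).re| ≤
      4 * M / (t * a ^ 2) + (√(2 * Real.pi) + 6 * lorentzMoment (1 / 2)) *
        (3 * t * a) ^ (-(3 / 4) : ℝ) * dL2 w := by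
  set φ := airyPhase t (-(3 * t * a ^ 2)) with hφ
  have hφc : Continuous φ := (contDiff_airyPhase (n := 2) _ _).continuous
  obtain ⟨L, hL⟩ := (isStationaryPhaseOn_airyPhase ht ha).exists_tendsto_integral_osc
  have hAi : t ^ (-(1 / 3 : ℝ)) * (AiFock (-(3 * t * a ^ 2) / t ^ (1 / 3 : ℝ)) * w a).re =
      1 / Real.pi * (L * w a).re := by
    have hτ : t ^ (1 / 3 : ℝ) ≠ 0 := (Real.rpow_pos_of_pos ht _).ne'
    rw [AiFock_eq_of_tendsto ht hL, mul_assoc, Complex.re_ofReal_mul, Real.rpow_neg ht.le]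
    field_simp
  have hlim := hv.sub (((Complex.continuous_re.tendsto _).comp
    (hL.mul_const (w a))).const_mul (1 / Real.pi))
  rw [hAi]
  refine le_of_tendsto hlim.abs ?_
  filter_upwards [eventually_ge_atTop (2 * a)] with R hR
  have hR0 : 0 ≤ R := by linarith
  have hwc : ContinuousOn w (Ioi 0) := fun p hp => (hw p hp).continuousAt.continuousWithinAt
  have hbound := norm_integral_osc_airyPhase_smul_sub_le ht ha hR hM hw hw'
  rw [dL2_eq_lpNorm hw', physPartial_eq_integral_osc hR0, Function.comp_apply, ← mul_sub,
    ← Complex.sub_re, ← hφ, ← smul_eq_mul (∫ p in (0 : ℝ)..R, osc φ p),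
    ← integral_osc_smul_sub hφc (intervalIntegrable_osc_smul_of_norm_le hφc hR0 hwc hM),
    abs_mul, abs_of_pos (by positivity)]
  have hpi : 1 / Real.pi ≤ 1 := by
    rw [div_le_one Real.pi_pos]
    linarith [Real.pi_gt_three]
  calc 1 / Real.pi * |(∫ p in (0 : ℝ)..R, osc φ p • (w p - w a)).re|
      ≤ 1 * ‖∫ p in (0 : ℝ)..R, osc φ p • (w p - w a)‖ := by
        gcongr
        exact Complex.abs_re_le_norm _
    _ ≤ _ := by rwa [one_mul]

lemma rpow_neg_three_quarters_le (ht : 0 < t) (ha : 0 < a) :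
    (3 * t * a) ^ (-(3 / 4) : ℝ) ≤ (t * (3 * t * a ^ 2)) ^ (-(3 / 8 : ℝ)) := by
  have hsqrt : √(t * (3 * t * a ^ 2)) ≤ 3 * t * a :=
    Real.sqrt_le_iff.2 ⟨by positivity, by nlinarith [mul_pos ht ha]⟩
  refine (Real.rpow_le_rpow_of_nonpos (by positivity) hsqrt (by norm_num)).trans_eq ?_
  rw [Real.sqrt_eq_rpow, ← Real.rpow_mul (by positivity)]
  norm_num

end Airy

theorem airy_asymptotics_left_general :
    ∃ C : ℝ, 0 < C ∧
    ∀ t : ℝ, 0 < t → ∀ (w : ℝ → ℂ) (M : ℝ), (∀ p ∈ Ioi (0 : ℝ), ‖w p‖ ≤ M) →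
      (∀ p ∈ Ioi (0 : ℝ), DifferentiableAt ℝ w p) →
      MemLp (deriv w) 2 (volume.restrict (Ioi 0)) →
    ∀ x : ℝ, x < 0 → ∀ v : ℝ, Tendsto (physPartial w t x) atTop (𝓝 v) →
      |v - t ^ (-(1 / 3 : ℝ)) *
          (AiFock (x / t ^ (1 / 3 : ℝ)) * w (Real.sqrt (|x| / (3 * t)))).re|
        ≤ C * (M / |x| + (t * |x|) ^ (-(3 / 8 : ℝ)) * dL2 w) := by
  set C₀ := √(2 * Real.pi) + 6 * lorentzMoment (1 / 2) with hC₀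
  have hC₀_nonneg : 0 ≤ C₀ := by
    have := lorentzMoment_nonneg (1 / 2)
    positivity
  refine ⟨12 + C₀, by positivity, fun t ht w M hM hw hw' x hx v hv => ?_⟩
  set a := √(|x| / (3 * t)) with ha
  have hx0 : 0 < |x| := abs_pos.2 hx.ne
  have ha0 : 0 < a := Real.sqrt_pos.2 (by positivity)
  have hxa : |x| = 3 * t * a ^ 2 := by
    rw [ha, Real.sq_sqrt (by positivity)]
    field_simp
  have hrate : (3 * t * a) ^ (-(3 / 4) : ℝ) ≤ (t * |x|) ^ (-(3 / 8 : ℝ)) :=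
    hxa ▸ rpow_neg_three_quarters_le ht ha0
  have hM0 : 0 ≤ M := (norm_nonneg _).trans (hM 1 (mem_Ioi.2 one_pos))
  have hD0 : 0 ≤ dL2 w := ENNReal.toReal_nonneg
  have hx' : x = -(3 * t * a ^ 2) := by rw [← hxa, abs_of_neg hx, neg_neg]
  rw [hx'] at hv ⊢
  refine (abs_sub_re_AiFock_mul_le ht ha0 hM hw hw' hv).trans ?_
  rw [← hx', ← hC₀]
  calc 4 * M / (t * a ^ 2) + C₀ * (3 * t * a) ^ (-(3 / 4) : ℝ) * dL2 w
      ≤ 12 * (M / |x|) + C₀ * (t * |x|) ^ (-(3 / 8 : ℝ)) * dL2 w := by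
        gcongr
        rw [hxa]
        field_simp
        linarith
    _ ≤ (12 + C₀) * (M / |x| + (t * |x|) ^ (-(3 / 8 : ℝ)) * dL2 w) := by
        have hM' : 0 ≤ C₀ * (M / |x|) := by positivity
        have hD' : 0 ≤ 12 * ((t * |x|) ^ (-(3 / 8 : ℝ)) * dL2 w) := by positivity
        linarith

lemma rpow_le_two_mul_jap_rpow {y s : ℝ} (hy : 1 ≤ y) (hs : s ≤ -(3 / 10)) :
    y ^ s ≤ 2 * jap y ^ (-(3 / 10 : ℝ)) := by
  have hy0 : 0 < y := by linarith
  have hjap : jap y ≤ 2 * y := Real.sqrt_le_iff.2 ⟨by positivity, by nlinarith⟩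
  have hjap0 : 0 < jap y := Real.sqrt_pos.2 (by positivity)
  have htwo : (2 : ℝ)⁻¹ ≤ 2 ^ (-(3 / 10 : ℝ)) := by
    rw [← Real.rpow_neg_one]
    exact Real.rpow_le_rpow_of_exponent_le one_le_two (by norm_num)
  calc y ^ s ≤ y ^ (-(3 / 10 : ℝ)) := Real.rpow_le_rpow_of_exponent_le hy hs
    _ = 2 * (2⁻¹ * y ^ (-(3 / 10 : ℝ))) := by ring
    _ ≤ 2 * (2 ^ (-(3 / 10 : ℝ)) * y ^ (-(3 / 10 : ℝ))) := by gcongr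
    _ = 2 * (2 * y) ^ (-(3 / 10 : ℝ)) := by rw [Real.mul_rpow zero_le_two hy0.le]
    _ ≤ 2 * jap y ^ (-(3 / 10 : ℝ)) := by
        have hexp : (-(3 / 10) : ℝ) ≤ 0 := by norm_num
        gcongr 2 * ?_
        exact Real.rpow_le_rpow_of_nonpos hjap0 hjap hexp

lemma div_abs_add_rpow_mul_le {t x A B C : ℝ} (ht : 0 < t) (hx : x < -t ^ (1 / 3 : ℝ))
    (hA : 0 ≤ A) (hB : 0 ≤ B) (hC : 0 ≤ C) :
    C * (A / |x| + (t * |x|) ^ (-(3 / 8 : ℝ)) * B) ≤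
      2 * C * t ^ (-(1 / 3 : ℝ)) * jap (|x| / t ^ (1 / 3 : ℝ)) ^ (-(3 / 10 : ℝ)) *
        (A + t ^ (-(1 / 6 : ℝ)) * B) := by
  set τ := t ^ (1 / 3 : ℝ) with hτ
  set y := |x| / τ with hy
  have hτ0 : 0 < τ := Real.rpow_pos_of_pos ht _
  have hy1 : 1 ≤ y := by
    rw [hy, one_le_div hτ0]
    linarith [neg_le_abs x]
  have hxy : |x| = τ * y := (mul_div_cancel₀ |x| hτ0.ne').symm
  have hinv : 1 / |x| = t ^ (-(1 / 3 : ℝ)) * y ^ (-1 : ℝ) := by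
    rw [hxy, one_div, mul_inv, Real.rpow_neg ht.le, Real.rpow_neg_one]
  have hrate : (t * |x|) ^ (-(3 / 8 : ℝ)) =
      t ^ (-(1 / 3 : ℝ)) * t ^ (-(1 / 6 : ℝ)) * y ^ (-(3 / 8) : ℝ) := by
    have ht4 : t * τ = t ^ (4 / 3 : ℝ) := by
      rw [hτ, ← Real.rpow_one_add' ht.le (by norm_num)]
      norm_num
    rw [hxy, ← mul_assoc, ht4, Real.mul_rpow (by positivity) (by positivity),
      ← Real.rpow_mul ht.le, ← Real.rpow_add ht]
    norm_num
  calc C * (A / |x| + (t * |x|) ^ (-(3 / 8 : ℝ)) * B)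
      = C * t ^ (-(1 / 3 : ℝ)) *
          (y ^ (-1 : ℝ) * A + y ^ (-(3 / 8) : ℝ) * (t ^ (-(1 / 6 : ℝ)) * B)) := by
        rw [div_eq_mul_one_div, hinv, hrate]
        ring
    _ ≤ C * t ^ (-(1 / 3 : ℝ)) * (2 * jap y ^ (-(3 / 10 : ℝ)) * A +
          2 * jap y ^ (-(3 / 10 : ℝ)) * (t ^ (-(1 / 6 : ℝ)) * B)) := by
        gcongr <;> exact rpow_le_two_mul_jap_rpow hy1 (by norm_num)
    _ = 2 * C * t ^ (-(1 / 3 : ℝ)) * jap y ^ (-(3 / 10 : ℝ)) * (A + t ^ (-(1 / 6 : ℝ)) * B) := by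
        ring

/-- Airy asymptotics on the left. -/
theorem airy_asymptotics_left :
    ∃ C : ℝ, 0 < C ∧
    ∀ t : ℝ, 0 < t → ∀ w : ℝ → ℂ, MemE w →
    ∀ u : ℝ → ℝ, IsPhys w t u →
      ∀ x : ℝ, x < -t ^ (1 / 3 : ℝ) →
        |u x - t ^ (-(1 / 3 : ℝ)) *
            (AiFock (x / t ^ (1 / 3 : ℝ)) * w (Real.sqrt (|x| / (3 * t)))).re|
          ≤ C * t ^ (-(1 / 3 : ℝ)) * jap (|x| / t ^ (1 / 3 : ℝ)) ^ (-(3 / 10 : ℝ)) *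
            EnormP t w := by
  obtain ⟨C, hC, hgeneral⟩ := airy_asymptotics_left_general
  refine ⟨2 * C, by positivity, fun t ht w hw u hu x hx => ?_⟩
  have hM (p : ℝ) : ‖w p‖ ≤ supN w := le_ciSup hw.bdd p
  have hx0 : x < 0 := hx.trans (neg_lt_zero.2 (Real.rpow_pos_of_pos ht _))
  exact (hgeneral t ht w _ (fun p _ => hM p) hw.diff hw.derivL2 x hx0 _ (hu x)).trans
    (div_abs_add_rpow_mul_le ht hx ((norm_nonneg _).trans (hM 0)) ENNReal.toReal_nonneg hC.le)

end MKdVPaper
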